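/- Every ℓ-minor [A|B] of P with |B ∩ C_j| ≥ 2 for some j lies in the ideal generated by all 2-minors of the matrices P_{C_j}, j ∈ [ℓ]. -/

import Mathlib

theorem det_zero_of_two_col_aux {S : Type} [CommRing S] {n : ℕ} (N : Matrix (Fin n) (Fin n) S)
    (p q : Fin n) (hpq : p ≠ q)
    (h : ∀ i j, N i p * N j q = N i q * N j p) : N.det = 0 := by
  rw [Matrix.det_apply']
  have key : ∀ σ : Equiv.Perm (Fin n),
      ∏ i, N ((σ * Equiv.swap p q) i) i = ∏ i, N (σ i) i := by
    intro σ
    have hq : q ∈ (Finset.univ : Finset (Fin n)).erase p := by simp [hpq.symm]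
    rw [← Finset.mul_prod_erase _ _ (Finset.mem_univ p), ← Finset.mul_prod_erase _ _ hq,
      ← Finset.mul_prod_erase Finset.univ (fun i => N (σ i) i) (Finset.mem_univ p),
      ← Finset.mul_prod_erase _ (fun i => N (σ i) i) hq, ← mul_assoc, ← mul_assoc]
    congr 1
    · simp only [Equiv.Perm.mul_apply, Equiv.swap_apply_left, Equiv.swap_apply_right]
      rw [h, mul_comm]
    · refine Finset.prod_congr rfl fun i hi => ?_
      simp only [Finset.mem_erase, Finset.mem_univ, and_true] at hi
      rw [Equiv.Perm.mul_apply, Equiv.swap_apply_of_ne_of_ne hi.2 hi.1]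
  refine Finset.sum_involution (fun σ _ => σ * Equiv.swap p q) ?_ ?_ ?_ ?_
  · intro σ _
    rw [key, Equiv.Perm.sign_mul, Equiv.Perm.sign_swap hpq]
    simp
  · intro σ _ _ he
    exact hpq (by simpa [Equiv.swap_eq_one_iff] using he)
  · intro σ _
    exact Finset.mem_univ _
  · intro σ _
    simp [mul_assoc]

/-- Every `ℓ`-minor `[A|B]` of a `d × kℓ` matrix whose column set `B` meets some column
block `C j` in at least two columns lies in the ideal generated by all `2`-minors of the
blocks `P_{C j}`.  Columns are indexed by `Fin (k*ℓ)` and the block of a column `c`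
is `c / k`. -/
theorem ellMinor_mem_span_blockTwoMinors (R : Type) [CommRing R] (d k ℓ : ℕ) (hld : ℓ ≤ d)
    (M : Matrix (Fin d) (Fin (k * ℓ)) R)
    (A : Finset (Fin d)) (B : Finset (Fin (k * ℓ)))
    (hA : A.card = ℓ) (hB : B.card = ℓ)
    (hmeet : ∃ j : Fin ℓ, 2 ≤ (B.filter (fun c => c.val / k = j.val)).card) :
    (Matrix.of fun a b : Fin ℓ =>
        M (A.orderEmbOfFin hA a) (B.orderEmbOfFin hB b)).det ∈
      Ideal.span {x : R | ∃ (i₁ i₂ : Fin d) (c₁ c₂ : Fin (k * ℓ)),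
        c₁.val / k = c₂.val / k ∧
        x = M i₁ c₁ * M i₂ c₂ - M i₁ c₂ * M i₂ c₁} := by
  obtain ⟨j, hj⟩ := hmeet
  obtain ⟨b, hb, b', hb', hne⟩ := Finset.one_lt_card.mp hj
  rw [Finset.mem_filter] at hb hb'
  have hr := Finset.range_orderEmbOfFin B hB
  obtain ⟨p, hp⟩ : b ∈ Set.range (B.orderEmbOfFin hB) := by rw [hr]; exact hb.1
  obtain ⟨q, hq⟩ : b' ∈ Set.range (B.orderEmbOfFin hB) := by rw [hr]; exact hb'.1
  rw [← Ideal.Quotient.eq_zero_iff_mem, RingHom.map_det]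
  refine det_zero_of_two_col_aux _ p q ?_ ?_
  · rintro rfl
    exact hne (hp.symm.trans hq)
  · intro i i'
    simp only [RingHom.mapMatrix_apply, Matrix.map_apply, Matrix.of_apply, hp, hq]
    rw [← map_mul, ← map_mul, Ideal.Quotient.eq]
    exact Ideal.subset_span ⟨_, _, b, b', hb.2.trans hb'.2.symm, rfl⟩
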